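/- arXiv:2307.07257 — 2 statements merged into one kernel-verified Lean document; each statement's English description precedes it below -/
import Mathlib

section
/- Let σ > 0 and let U ⊆ ℝ × ℝ^d be open. Let B : U → ℝ^m and Q : U → ℝ with Q ≥ 0 on U, and let ρ : U → ℝ be C¹ in t and C² in x with continuous derivatives, satisfying ∂_t ρ − σ Δ_G ρ + B·∇_G ρ + Q ρ = 0 pointwise on U. Then for every ε > 0 the function w := √(ρ² + ε) satisfies the differential inequality ∂_t w − σ Δ_G w + B·∇_G w ≤ 0 pointwise on U. -/
open MeasureTheory Set

noncomputable section

/-- Derivative of `f : ℝ^d → ℝ` along the vector field `X` (horizontal derivative `X f`). -/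
def vderiv {d : ℕ} (X : (Fin d → ℝ) → (Fin d → ℝ)) (f : (Fin d → ℝ) → ℝ)
    (x : Fin d → ℝ) : ℝ := fderiv ℝ f x (X x)

/-- Squared Euclidean norm of the horizontal gradient `∇_G f`. -/
def hgradSq {d m : ℕ} (X : Fin m → (Fin d → ℝ) → (Fin d → ℝ)) (f : (Fin d → ℝ) → ℝ)
    (x : Fin d → ℝ) : ℝ := ∑ i, (vderiv (X i) f x) ^ 2

/-- Horizontal Laplacian `Δ_G f = Σ X_i (X_i f)`. -/
def hLap {d m : ℕ} (X : Fin m → (Fin d → ℝ) → (Fin d → ℝ)) (f : (Fin d → ℝ) → ℝ)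
    (x : Fin d → ℝ) : ℝ := ∑ i, vderiv (X i) (vderiv (X i) f) x

/-- Horizontal divergence `div_G B = Σ X_i B_i`. -/
def hdiv {d m : ℕ} (X : Fin m → (Fin d → ℝ) → (Fin d → ℝ)) (B : (Fin d → ℝ) → Fin m → ℝ)
    (x : Fin d → ℝ) : ℝ := ∑ i, vderiv (X i) (fun y => B y i) x

/-- Euclidean divergence `Σ_j ∂_{x_j} X^j` of a vector field on `ℝ^d`. -/
def ediv {d : ℕ} (X : (Fin d → ℝ) → (Fin d → ℝ)) (x : Fin d → ℝ) : ℝ :=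
  ∑ j, fderiv ℝ X x (Pi.single j 1) j

/-- Anisotropic dilations `δ_λ x = (λ^{w_1} x_1, …, λ^{w_d} x_d)`. -/
def dil {d : ℕ} (w : Fin d → ℕ) (l : ℝ) (x : Fin d → ℝ) : Fin d → ℝ :=
  fun i => l ^ (w i) * x i

/-- A vector field is `δ`-homogeneous of degree one. -/
def homogOne {d : ℕ} (w : Fin d → ℕ) (X : (Fin d → ℝ) → (Fin d → ℝ)) : Prop :=
  ∀ l : ℝ, 0 < l → ∀ x, fderiv ℝ (dil w l) x (X x) = l • X (dil w l x)

lemma hasDerivAt_sqrtReg (ε : ℝ) (hε : 0 < ε) (t : ℝ) :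
    HasDerivAt (fun t : ℝ => Real.sqrt (t ^ 2 + ε)) (t / Real.sqrt (t ^ 2 + ε)) t := by
  have hpos : 0 < t ^ 2 + ε := by positivity
  have h : HasDerivAt (fun t : ℝ => Real.sqrt (t ^ 2 + ε))
      (2 * t / (2 * Real.sqrt (t ^ 2 + ε))) t := by
    have h0 : HasDerivAt (fun t : ℝ => t ^ 2 + ε) (2 * t) t := by
      simpa using (hasDerivAt_pow 2 t).add_const ε
    exact h0.sqrt hpos.ne'
  convert h using 1
  have := (Real.sqrt_pos.mpr hpos).ne'
  field_simp

lemma hasDerivAt_sqrtReg_deriv (ε : ℝ) (hε : 0 < ε) (t : ℝ) :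
    HasDerivAt (fun t : ℝ => t / Real.sqrt (t ^ 2 + ε)) (ε / Real.sqrt (t ^ 2 + ε) ^ 3) t := by
  have hpos : 0 < t ^ 2 + ε := by positivity
  have hs := (Real.sqrt_pos.mpr hpos).ne'
  have h := (hasDerivAt_id' t).div (hasDerivAt_sqrtReg ε hε t) hs
  refine HasDerivAt.congr_deriv h ?_
  have hsq := Real.sq_sqrt hpos.le
  field_simp
  rw [hsq]
  ring

lemma vderiv_comp {d : ℕ} (X : (Fin d → ℝ) → (Fin d → ℝ)) (f : (Fin d → ℝ) → ℝ)
    (x : Fin d → ℝ) (F : ℝ → ℝ) (F' : ℝ) (hF : HasDerivAt F F' (f x))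
    (hf : DifferentiableAt ℝ f x) : vderiv X (fun y => F (f y)) x = F' * vderiv X f x := by
  have h := hF.comp_hasFDerivAt x hf.hasFDerivAt
  have h2 : fderiv ℝ (fun y => F (f y)) x = F' • fderiv ℝ f x := h.fderiv
  simp [vderiv, h2]

lemma vderiv2_sqrtReg {d : ℕ} (X : (Fin d → ℝ) → (Fin d → ℝ)) (hX : ContDiff ℝ (⊤ : ℕ∞) X)
    (f : (Fin d → ℝ) → ℝ) (x : Fin d → ℝ) (hf : ContDiffAt ℝ 2 f x) (ε : ℝ) (hε : 0 < ε) :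
    vderiv X (vderiv X (fun y => Real.sqrt (f y ^ 2 + ε))) x
      = ε / Real.sqrt (f x ^ 2 + ε) ^ 3 * vderiv X f x ^ 2
        + f x / Real.sqrt (f x ^ 2 + ε) * vderiv X (vderiv X f) x := by
  have hev : vderiv X (fun y => Real.sqrt (f y ^ 2 + ε)) =ᶠ[nhds x]
      fun y => (f y / Real.sqrt (f y ^ 2 + ε)) * vderiv X f y := by
    filter_upwards [hf.eventually (by simp)] with y hy
    exact vderiv_comp X f y _ _ (hasDerivAt_sqrtReg ε hε (f y)) (hy.differentiableAt (by simp))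
  have hfd : DifferentiableAt ℝ f x := hf.differentiableAt (by simp)
  have hG : HasFDerivAt (fun y => f y / Real.sqrt (f y ^ 2 + ε)) _ x :=
    (hasDerivAt_sqrtReg_deriv ε hε (f x)).comp_hasFDerivAt x hfd.hasFDerivAt
  have hV : DifferentiableAt ℝ (vderiv X f) x := by
    have h1 : DifferentiableAt ℝ (fderiv ℝ f) x :=
      (hf.fderiv_right (m := 1) (by norm_num)).differentiableAt (by simp)
    have h2 : DifferentiableAt ℝ X x := (hX.differentiable (by simp)) x
    exact h1.clm_apply h2
  have hm := (hG.mul hV.hasFDerivAt).fderiv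
  have h0 : vderiv X (vderiv X (fun y => Real.sqrt (f y ^ 2 + ε))) x
      = fderiv ℝ (fun y => (f y / Real.sqrt (f y ^ 2 + ε)) * vderiv X f y) x (X x) := by
    rw [← hev.fderiv_eq]; rfl
  have h1 : fderiv ℝ (vderiv X f) x (X x) = vderiv X (vderiv X f) x := rfl
  have h2 : fderiv ℝ f x (X x) = vderiv X f x := rfl
  rw [h0]
  erw [hm]
  simp [h1, h2]
  ring

/-- If `ρ` solves `∂_t ρ − σ Δ_G ρ + B·∇_G ρ + Q ρ = 0` on an open set `U`
with `Q ≥ 0`, then for every `ε > 0` the function `w = √(ρ² + ε)` satisfies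
`∂_t w − σ Δ_G w + B·∇_G w ≤ 0` on `U`. -/
theorem sqrt_regularization_subsolution {d m : ℕ} (hd : 0 < d) (hm : 0 < m)
    (X : Fin m → (Fin d → ℝ) → (Fin d → ℝ)) (hXsm : ∀ i, ContDiff ℝ (⊤ : ℕ∞) (X i))
    (σ : ℝ) (hσ : 0 < σ)
    (U : Set (ℝ × (Fin d → ℝ))) (hU : IsOpen U)
    (B : ℝ → (Fin d → ℝ) → Fin m → ℝ) (Q : ℝ → (Fin d → ℝ) → ℝ)
    (hQ : ∀ p ∈ U, 0 ≤ Q p.1 p.2)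
    (ρ : ℝ → (Fin d → ℝ) → ℝ)
    (hρt : ∀ p : ℝ × (Fin d → ℝ), p ∈ U → DifferentiableAt ℝ (fun s => ρ s p.2) p.1)
    (hρx : ∀ p : ℝ × (Fin d → ℝ), p ∈ U → ContDiffAt ℝ 2 (ρ p.1) p.2)
    (hρtcont : ContinuousOn (fun p : ℝ × (Fin d → ℝ) => deriv (fun s => ρ s p.2) p.1) U)
    (hρxcont : ∀ i, ContinuousOn (fun p : ℝ × (Fin d → ℝ) => vderiv (X i) (ρ p.1) p.2) U)
    (hρxxcont : ∀ i i', ContinuousOn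
        (fun p : ℝ × (Fin d → ℝ) => vderiv (X i) (vderiv (X i') (ρ p.1)) p.2) U)
    (hPDE : ∀ p : ℝ × (Fin d → ℝ), p ∈ U →
        deriv (fun s => ρ s p.2) p.1 - σ * hLap X (ρ p.1) p.2
          + (∑ i, B p.1 p.2 i * vderiv (X i) (ρ p.1) p.2) + Q p.1 p.2 * ρ p.1 p.2 = 0)
    (ε : ℝ) (hε : 0 < ε) :
    ∀ p : ℝ × (Fin d → ℝ), p ∈ U →
      deriv (fun s => Real.sqrt (ρ s p.2 ^ 2 + ε)) p.1
        - σ * hLap X (fun y => Real.sqrt (ρ p.1 y ^ 2 + ε)) p.2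
        + (∑ i, B p.1 p.2 i * vderiv (X i) (fun y => Real.sqrt (ρ p.1 y ^ 2 + ε)) p.2) ≤ 0 := by
  intro p hp
  have hfd : DifferentiableAt ℝ (ρ p.1) p.2 := (hρx p hp).differentiableAt (by simp)
  have ht : deriv (fun s => Real.sqrt (ρ s p.2 ^ 2 + ε)) p.1
      = ρ p.1 p.2 / Real.sqrt (ρ p.1 p.2 ^ 2 + ε) * deriv (fun s => ρ s p.2) p.1 :=
    (HasDerivAt.comp (h₂ := fun t : ℝ => Real.sqrt (t ^ 2 + ε)) p.1
      (hasDerivAt_sqrtReg ε hε (ρ p.1 p.2)) (hρt p hp).hasDerivAt).deriv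
  have hv : ∀ i, vderiv (X i) (fun y => Real.sqrt (ρ p.1 y ^ 2 + ε)) p.2
      = ρ p.1 p.2 / Real.sqrt (ρ p.1 p.2 ^ 2 + ε) * vderiv (X i) (ρ p.1) p.2 := fun i =>
    vderiv_comp (X i) (ρ p.1) p.2 _ _ (hasDerivAt_sqrtReg ε hε (ρ p.1 p.2)) hfd
  have hL : hLap X (fun y => Real.sqrt (ρ p.1 y ^ 2 + ε)) p.2
      = ε / Real.sqrt (ρ p.1 p.2 ^ 2 + ε) ^ 3 * (∑ i, vderiv (X i) (ρ p.1) p.2 ^ 2)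
        + ρ p.1 p.2 / Real.sqrt (ρ p.1 p.2 ^ 2 + ε) * hLap X (ρ p.1) p.2 := by
    unfold hLap
    rw [Finset.mul_sum, Finset.mul_sum, ← Finset.sum_add_distrib]
    exact Finset.sum_congr rfl fun i _ =>
      vderiv2_sqrtReg (X i) (hXsm i) (ρ p.1) p.2 (hρx p hp) ε hε
  have hB : (∑ i, B p.1 p.2 i * vderiv (X i) (fun y => Real.sqrt (ρ p.1 y ^ 2 + ε)) p.2)
      = ρ p.1 p.2 / Real.sqrt (ρ p.1 p.2 ^ 2 + ε)
        * ∑ i, B p.1 p.2 i * vderiv (X i) (ρ p.1) p.2 := by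
    rw [Finset.mul_sum]
    refine Finset.sum_congr rfl fun i _ => ?_
    rw [hv i]; ring
  rw [ht, hL, hB]
  have hP := hPDE p hp
  have hq := hQ p hp
  have hS : 0 ≤ σ * (ε / Real.sqrt (ρ p.1 p.2 ^ 2 + ε) ^ 3
      * (∑ i, vderiv (X i) (ρ p.1) p.2 ^ 2)) := by positivity
  have hR : 0 ≤ Q p.1 p.2 * (ρ p.1 p.2 ^ 2 / Real.sqrt (ρ p.1 p.2 ^ 2 + ε)) := by positivity
  have key := congrArg (fun z => ρ p.1 p.2 / Real.sqrt (ρ p.1 p.2 ^ 2 + ε) * z) hP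
  simp only [mul_zero] at key
  have e : Q p.1 p.2 * (ρ p.1 p.2 ^ 2 / Real.sqrt (ρ p.1 p.2 ^ 2 + ε))
    = ρ p.1 p.2 / Real.sqrt (ρ p.1 p.2 ^ 2 + ε) * (Q p.1 p.2 * ρ p.1 p.2) := by ring
  rw [e] at hR
  linarith
end
end

section
/- Let σ > 0 and T > 0. Assume each X_i is divergence-free and δ-homogeneous of degree one. Let b : [0,T]×ℝ^d → ℝ^m be bounded and continuous, with b(t,·) ∈ C¹(ℝ^d, ℝ^m) for each t. Let ρ : [0,T]×ℝ^d → ℝ be continuous and bounded, C¹ in t and C² in x on (0,T)×ℝ^d with these derivatives continuous, satisfying the Fokker–Planck equation ∂_t ρ = σ Δ_G ρ + div_G(b(t,·) ρ(t,·)) pointwise on (0,T)×ℝ^d, and such that sup over t ∈ [0,T] of ∫_{ℝ^d} |ρ(t,x)| dx is finite. Then mass is conserved: ∫_{ℝ^d} ρ(t,x) dx = ∫_{ℝ^d} ρ(0,x) dx for every t ∈ [0,T]. -/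
open MeasureTheory Set

noncomputable section

lemma vderiv_continuous {d : ℕ} {X : (Fin d → ℝ) → (Fin d → ℝ)} (hX : Continuous X)
    {f : (Fin d → ℝ) → ℝ} (hf : ContDiff ℝ 1 f) : Continuous (vderiv X f) := by
  unfold vderiv
  exact (hf.continuous_fderiv (by norm_num)).clm_apply hX

lemma vderiv_contDiff {d : ℕ} {X : (Fin d → ℝ) → (Fin d → ℝ)} (hX : ContDiff ℝ (⊤ : ℕ∞) X)
    {f : (Fin d → ℝ) → ℝ} (hf : ContDiff ℝ 2 f) : ContDiff ℝ 1 (vderiv X f) := by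
  unfold vderiv
  exact (hf.fderiv_right (m := 1) (by norm_num)).clm_apply (hX.of_le (by exact_mod_cast le_top))

lemma vderiv_compact {d : ℕ} (X : (Fin d → ℝ) → (Fin d → ℝ))
    {f : (Fin d → ℝ) → ℝ} (hf : HasCompactSupport f) : HasCompactSupport (vderiv X f) := by
  refine (hf.fderiv (𝕜 := ℝ)).mono ?_
  intro x hx
  simp only [Function.mem_support, vderiv] at hx ⊢
  intro h
  exact hx (by rw [h]; simp)

/-- The integral of `X h` vanishes for divergence-free `X` and compactly supported `h`. -/
lemma integral_vderiv_zero {d : ℕ} {X : (Fin d → ℝ) → (Fin d → ℝ)}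
    (hX : ContDiff ℝ (⊤ : ℕ∞) X) (hdiv : ∀ x, ediv X x = 0)
    {h : (Fin d → ℝ) → ℝ} (hh : ContDiff ℝ 1 h) (hc : HasCompactSupport h) :
    ∫ x, vderiv X h x = 0 := by
  have hX1 : ContDiff ℝ 1 X := hX.of_le (by exact_mod_cast le_top)
  have hXj : ∀ j, ContDiff ℝ 1 (fun x => X x j) := fun j => (contDiff_pi.1 hX1) j
  have hder : ∀ j x, fderiv ℝ (fun x => X x j) x (Pi.single j 1)
      = fderiv ℝ X x (Pi.single j 1) j := by
    intro j x
    have := (hX1.differentiable (by norm_num) x).hasFDerivAt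
    rw [((hasFDerivAt_pi'.1 this) j).fderiv]
    rfl
  have e1 : ∀ x, vderiv X h x = ∑ j, X x j * fderiv ℝ h x (Pi.single j 1) := by
    intro x
    unfold vderiv
    conv_lhs => rw [pi_eq_sum_univ' (X x)]
    simp [map_sum]
  have hc1 : ∀ j, HasCompactSupport (fun x => fderiv ℝ h x (Pi.single j 1)) :=
    fun j => hc.fderiv_apply (𝕜 := ℝ) _
  have cont1 : ∀ j, Continuous (fun x => fderiv ℝ h x (Pi.single j 1)) := fun j =>
    (hh.continuous_fderiv (by norm_num)).clm_apply continuous_const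
  have cont2 : ∀ j, Continuous (fun x => fderiv ℝ (fun x => X x j) x (Pi.single j 1)) := fun j =>
    ((hXj j).continuous_fderiv (by norm_num)).clm_apply continuous_const
  have i1 : ∀ j, Integrable (fun x => X x j * fderiv ℝ h x (Pi.single j 1)) := fun j =>
    ((hXj j).continuous.mul (cont1 j)).integrable_of_hasCompactSupport (hc1 j).mul_left
  have i2 : ∀ j, Integrable (fun x => fderiv ℝ (fun x => X x j) x (Pi.single j 1) * h x) :=
    fun j => ((cont2 j).mul hh.continuous).integrable_of_hasCompactSupport hc.mul_left
  have i3 : ∀ j, Integrable (fun x => X x j * h x) :=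
    fun j => ((hXj j).continuous.mul hh.continuous).integrable_of_hasCompactSupport hc.mul_left
  simp_rw [e1]
  rw [integral_finsetSum _ (fun j _ => i1 j)]
  have e2 : ∀ j, ∫ x, X x j * fderiv ℝ h x (Pi.single j 1)
      = - ∫ x, fderiv ℝ (fun x => X x j) x (Pi.single j 1) * h x := fun j =>
    integral_mul_fderiv_eq_neg_fderiv_mul_of_integrable (i2 j) (i1 j) (i3 j)
      (fun x _ => (hXj j).differentiable (by norm_num) x)
      (fun x _ => hh.differentiable (by norm_num) x)
  simp_rw [e2]
  rw [Finset.sum_neg_distrib, ← integral_finsetSum _ (fun j _ => i2 j)]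
  have : ∀ x, ∑ j, fderiv ℝ (fun x => X x j) x (Pi.single j 1) * h x = 0 := by
    intro x
    rw [← Finset.sum_mul]
    simp_rw [hder]
    have := hdiv x
    unfold ediv at this
    rw [this, zero_mul]
  simp [this]

/-- Integration by parts along a divergence-free field. -/
lemma integral_vderiv_mul {d : ℕ} {X : (Fin d → ℝ) → (Fin d → ℝ)}
    (hX : ContDiff ℝ (⊤ : ℕ∞) X) (hdiv : ∀ x, ediv X x = 0)
    {f g : (Fin d → ℝ) → ℝ} (hf : ContDiff ℝ 1 f) (hg : ContDiff ℝ 1 g)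
    (hc : HasCompactSupport g) :
    ∫ x, vderiv X f x * g x = - ∫ x, f x * vderiv X g x := by
  have h0 := integral_vderiv_zero hX hdiv (hf.mul hg) hc.mul_left
  have e : ∀ x, vderiv X (fun x => f x * g x) x = vderiv X f x * g x + f x * vderiv X g x := by
    intro x
    unfold vderiv
    rw [fderiv_fun_mul (hf.differentiable (by norm_num) x) (hg.differentiable (by norm_num) x)]
    simp
    ring
  have h1 : Integrable (fun x => vderiv X f x * g x) :=
    ((vderiv_continuous hX.continuous hf).mul hg.continuous).integrable_of_hasCompactSupport
      hc.mul_left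
  have h2 : Integrable (fun x => f x * vderiv X g x) :=
    (hf.continuous.mul (vderiv_continuous hX.continuous hg)).integrable_of_hasCompactSupport
      (vderiv_compact X hc).mul_left
  have h3 : ∫ x, vderiv X (fun x => f x * g x) x = 0 := h0
  simp_rw [e] at h3
  rw [integral_add h1 h2] at h3
  linarith

lemma dil_contDiff {d : ℕ} (w : Fin d → ℕ) (l : ℝ) {n : WithTop ℕ∞} : ContDiff ℝ n (dil w l) := by
  unfold dil
  fun_prop

lemma vderiv_dil {d : ℕ} {w : Fin d → ℕ} {X : (Fin d → ℝ) → (Fin d → ℝ)} (hX : homogOne w X)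
    {l : ℝ} (hl : 0 < l) {f : (Fin d → ℝ) → ℝ} (hf : Differentiable ℝ f) (c : ℝ) :
    vderiv X (fun x => c * f (dil w l x)) = fun x => (c * l) * vderiv X f (dil w l x) := by
  funext x
  unfold vderiv
  have h1 : HasFDerivAt (fun x => f (dil w l x))
      ((fderiv ℝ f (dil w l x)).comp (fderiv ℝ (dil w l) x)) x :=
    (hf _).hasFDerivAt.comp x
      (((dil_contDiff w l (n := 1)).differentiable (by norm_num) x).hasFDerivAt)
  rw [(h1.const_mul c).fderiv]
  simp [hX l hl x]
  ring

lemma dil_compact {d : ℕ} (w : Fin d → ℕ) {l : ℝ} (hl : 0 < l) {f : (Fin d → ℝ) → ℝ}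
    (hf : HasCompactSupport f) : HasCompactSupport (fun x => f (dil w l x)) := by
  let e : (Fin d → ℝ) ≃ₜ (Fin d → ℝ) :=
    { toFun := dil w l
      invFun := dil w l⁻¹
      left_inv := by
        intro x; funext i
        simp only [dil]
        rw [← mul_assoc, ← mul_pow, inv_mul_cancel₀ hl.ne', one_pow, one_mul]
      right_inv := by
        intro x; funext i
        simp only [dil]
        rw [← mul_assoc, ← mul_pow, mul_inv_cancel₀ hl.ne', one_pow, one_mul]
      continuous_toFun := (dil_contDiff w l (n := 0)).continuous
      continuous_invFun := (dil_contDiff w l⁻¹ (n := 0)).continuous }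
  exact hf.comp_homeomorph e

/-- Mass conservation for bounded classical solutions of the Fokker–Planck
equation `∂_t ρ = σ Δ_G ρ + div_G(b ρ)` on `(0,T) × ℝ^d`. -/
theorem fokkerPlanck_mass_conservation {d m : ℕ} (hd : 0 < d) (hm : 0 < m)
    (w : Fin d → ℕ) (hw : ∀ i, 0 < w i)
    (X : Fin m → (Fin d → ℝ) → (Fin d → ℝ)) (hXsm : ∀ i, ContDiff ℝ (⊤ : ℕ∞) (X i))
    (hXdivfree : ∀ i x, ediv (X i) x = 0)
    (hXhom : ∀ i, homogOne w (X i))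
    (σ T : ℝ) (hσ : 0 < σ) (hT : 0 < T)
    (b : ℝ → (Fin d → ℝ) → Fin m → ℝ) (Mb : ℝ)
    (hbcont : Continuous (fun p : ℝ × (Fin d → ℝ) => b p.1 p.2))
    (hbbd : ∀ t ∈ Set.Icc (0:ℝ) T, ∀ x i, |b t x i| ≤ Mb)
    (hbC1 : ∀ t ∈ Set.Icc (0:ℝ) T, ∀ i, ContDiff ℝ 1 (fun y => b t y i))
    (ρ : ℝ → (Fin d → ℝ) → ℝ) (Mρ : ℝ)
    (hρcont : ContinuousOn (fun p : ℝ × (Fin d → ℝ) => ρ p.1 p.2) (Set.Icc 0 T ×ˢ Set.univ))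
    (hρbd : ∀ t ∈ Set.Icc (0:ℝ) T, ∀ x, |ρ t x| ≤ Mρ)
    (hρt : ∀ (x : Fin d → ℝ), ∀ t ∈ Set.Ioo (0:ℝ) T, DifferentiableAt ℝ (fun s => ρ s x) t)
    (hρx : ∀ t ∈ Set.Ioo (0:ℝ) T, ContDiff ℝ 2 (ρ t))
    (hρtcont : ContinuousOn (fun p : ℝ × (Fin d → ℝ) => deriv (fun s => ρ s p.2) p.1)
        (Set.Ioo 0 T ×ˢ Set.univ))
    (hρxcont : ∀ i, ContinuousOn (fun p : ℝ × (Fin d → ℝ) => vderiv (X i) (ρ p.1) p.2)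
        (Set.Ioo 0 T ×ˢ Set.univ))
    (hρxxcont : ∀ i i', ContinuousOn
        (fun p : ℝ × (Fin d → ℝ) => vderiv (X i) (vderiv (X i') (ρ p.1)) p.2)
        (Set.Ioo 0 T ×ˢ Set.univ))
    (hPDE : ∀ t ∈ Set.Ioo (0:ℝ) T, ∀ x,
        deriv (fun s => ρ s x) t
          = σ * hLap X (ρ t) x + hdiv X (fun y i => b t y i * ρ t y) x)
    (hint : ∀ t ∈ Set.Icc (0:ℝ) T, MeasureTheory.Integrable (ρ t))
    (Mint : ℝ) (hsup : ∀ t ∈ Set.Icc (0:ℝ) T, (∫ x : Fin d → ℝ, |ρ t x|) ≤ Mint) :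
    ∀ t ∈ Set.Icc (0:ℝ) T, (∫ x : Fin d → ℝ, ρ t x) = ∫ x : Fin d → ℝ, ρ 0 x := by
  classical
  have hMb : 0 ≤ Mb :=
    (abs_nonneg _).trans (hbbd 0 ⟨le_rfl, hT.le⟩ 0 ⟨0, hm⟩)
  have hIoo : ∀ {t : ℝ}, t ∈ Ioo (0:ℝ) T → t ∈ Icc (0:ℝ) T := fun h => Ioo_subset_Icc_self h
  have hMint : 0 ≤ Mint :=
    (integral_nonneg (fun x => abs_nonneg _)).trans (hsup 0 ⟨le_rfl, hT.le⟩)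
  have hρc : ∀ t ∈ Icc (0:ℝ) T, Continuous (ρ t) := by
    intro t ht
    have : ContinuousOn (fun x : Fin d → ℝ => ρ t x) univ :=
      hρcont.comp (f := fun x : Fin d → ℝ => (t, x)) (by fun_prop) (fun x _ => ⟨ht, mem_univ _⟩)
    simpa [continuousOn_univ] using this
  -- the weak estimate on the time derivative
  have key : ∀ g : (Fin d → ℝ) → ℝ, ContDiff ℝ 2 g → HasCompactSupport g →
      ∀ K1 K2 : Fin m → ℝ, (∀ i x, |vderiv (X i) g x| ≤ K1 i) →
      (∀ i x, |vderiv (X i) (vderiv (X i) g) x| ≤ K2 i) → ∀ t ∈ Ioo (0:ℝ) T,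
      |∫ x, deriv (fun s => ρ s x) t * g x| ≤ (∑ i, (σ * K2 i + Mb * K1 i)) * Mint := by
    intro g hg hgc K1 K2 hK1 hK2 t ht
    have hg1 : ContDiff ℝ 1 g := hg.of_le (by norm_num)
    have hρ2 := hρx t ht
    have hρ1 : ContDiff ℝ 1 (ρ t) := hρ2.of_le (by norm_num)
    have hbρ : ∀ i, ContDiff ℝ 1 (fun y => b t y i * ρ t y) := fun i =>
      (hbC1 t (hIoo ht) i).mul hρ1
    have hXρ : ∀ i, ContDiff ℝ 1 (vderiv (X i) (ρ t)) := fun i => vderiv_contDiff (hXsm i) hρ2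
    have hXg : ∀ i, ContDiff ℝ 1 (vderiv (X i) g) := fun i => vderiv_contDiff (hXsm i) hg
    have e : ∀ x, deriv (fun s => ρ s x) t * g x
        = ∑ i, (σ * (vderiv (X i) (vderiv (X i) (ρ t)) x * g x)
          + vderiv (X i) (fun y => b t y i * ρ t y) x * g x) := by
      intro x
      rw [hPDE t ht x]
      unfold hLap hdiv
      rw [add_mul, Finset.sum_add_distrib, mul_assoc, Finset.sum_mul, Finset.sum_mul,
        Finset.mul_sum]
    have i1 : ∀ i, Integrable (fun x => σ * (vderiv (X i) (vderiv (X i) (ρ t)) x * g x)) :=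
      fun i => (((vderiv_continuous (hXsm i).continuous (hXρ i)).mul
        hg.continuous).integrable_of_hasCompactSupport hgc.mul_left).const_mul σ
    have i2 : ∀ i, Integrable (fun x => vderiv (X i) (fun y => b t y i * ρ t y) x * g x) :=
      fun i => ((vderiv_continuous (hXsm i).continuous (hbρ i)).mul
        hg.continuous).integrable_of_hasCompactSupport hgc.mul_left
    have i3 : ∀ i, Integrable (fun x => σ * (ρ t x * vderiv (X i) (vderiv (X i) g) x)) :=
      fun i => ((hρ1.continuous.mul (vderiv_continuous (hXsm i).continuous
        (hXg i))).integrable_of_hasCompactSupport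
          (vderiv_compact _ (vderiv_compact _ hgc)).mul_left).const_mul σ
    have i4 : ∀ i, Integrable (fun x => b t x i * ρ t x * vderiv (X i) g x) :=
      fun i => ((hbρ i).continuous.mul (hXg i).continuous).integrable_of_hasCompactSupport (vderiv_compact _ hgc).mul_left
    simp_rw [e]
    have i12 : ∀ i, Integrable (fun x => σ * (vderiv (X i) (vderiv (X i) (ρ t)) x * g x)
          + vderiv (X i) (fun y => b t y i * ρ t y) x * g x) := fun i => (i1 i).add (i2 i)
    rw [integral_finsetSum _ (fun i _ => i12 i), Finset.sum_mul]
    refine (Finset.abs_sum_le_sum_abs _ _).trans (Finset.sum_le_sum fun i _ => ?_)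
    have hE : ∫ x, (σ * (vderiv (X i) (vderiv (X i) (ρ t)) x * g x)
          + vderiv (X i) (fun y => b t y i * ρ t y) x * g x)
        = ∫ x, (σ * (ρ t x * vderiv (X i) (vderiv (X i) g) x)
          - b t x i * ρ t x * vderiv (X i) g x) := by
      rw [integral_add (i1 i) (i2 i), integral_sub (i3 i) (i4 i), integral_const_mul,
        integral_const_mul,
        integral_vderiv_mul (hXsm i) (hXdivfree i) (hXρ i) hg1 hgc,
        integral_vderiv_mul (hXsm i) (hXdivfree i) (hbρ i) hg1 hgc,
        integral_vderiv_mul (hXsm i) (hXdivfree i) hρ1 (hXg i) (vderiv_compact _ hgc)]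
      ring
    have hK1' : 0 ≤ K1 i := (abs_nonneg _).trans (hK1 i 0)
    have hK2' : 0 ≤ K2 i := (abs_nonneg _).trans (hK2 i 0)
    rw [hE]
    have hb := norm_integral_le_of_norm_le (μ := volume)
      (f := fun x => σ * (ρ t x * vderiv (X i) (vderiv (X i) g) x)
          - b t x i * ρ t x * vderiv (X i) g x)
      (g := fun x => (σ * K2 i + Mb * K1 i) * |ρ t x|)
      ((hint t (hIoo ht)).abs.const_mul _) (Filter.Eventually.of_forall fun x => by
        rw [Real.norm_eq_abs]
        refine (abs_sub _ _).trans ?_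
        rw [abs_mul, abs_mul, abs_mul, abs_mul, abs_of_pos hσ, add_mul]
        have h1 := hK1 i x
        have h2 := hK2 i x
        have h3 := hbbd t (hIoo ht) x i
        have h4 : |b t x i| * |vderiv (X i) g x| ≤ Mb * K1 i := by gcongr
        have h5 : |ρ t x| * |vderiv (X i) (vderiv (X i) g) x| ≤ |ρ t x| * K2 i := by gcongr
        have h6 := mul_le_mul_of_nonneg_left h4 (abs_nonneg (ρ t x))
        have h7 := mul_le_mul_of_nonneg_left h5 hσ.le
        nlinarith)
    rw [Real.norm_eq_abs] at hb
    refine hb.trans ?_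
    rw [integral_const_mul]
    exact mul_le_mul_of_nonneg_left (hsup t (hIoo ht)) (by positivity)
  -- continuity and derivative of the localised mass
  have hFcont : ∀ g : (Fin d → ℝ) → ℝ, Continuous g → HasCompactSupport g →
      ContinuousOn (fun t => ∫ x, ρ t x * g x) (Icc 0 T) := by
    intro g hg hgc
    refine continuousOn_of_dominated (bound := fun x => Mρ * |g x|) ?_ ?_ ?_ ?_
    · intro t ht
      exact ((hρc t ht).mul hg).aestronglyMeasurable
    · intro t ht
      refine Filter.Eventually.of_forall fun x => ?_
      rw [Real.norm_eq_abs, abs_mul]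
      exact mul_le_mul_of_nonneg_right (hρbd t ht x) (abs_nonneg _)
    · exact ((hg.integrable_of_hasCompactSupport hgc).abs).const_mul _
    · refine Filter.Eventually.of_forall fun x => ?_
      refine ContinuousOn.mul ?_ continuousOn_const
      exact hρcont.comp (f := fun t : ℝ => (t, x)) (by fun_prop) (fun t ht => ⟨ht, mem_univ _⟩)
  have hFder : ∀ g : (Fin d → ℝ) → ℝ, Continuous g → HasCompactSupport g →
      ∀ t ∈ Ioo (0:ℝ) T, HasDerivAt (fun t => ∫ x, ρ t x * g x)
        (∫ x, deriv (fun s => ρ s x) t * g x) t := by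
    intro g hg hgc t ht
    obtain ⟨a, ha0, hat⟩ := exists_between ht.1
    obtain ⟨c, htc, hcT⟩ := exists_between ht.2
    have hsub : ∀ s ∈ Icc a c, s ∈ Ioo (0:ℝ) T := fun s hs =>
      ⟨ha0.trans_le hs.1, hs.2.trans_lt hcT⟩
    obtain ⟨C, hC⟩ := (isCompact_Icc (a := a) (b := c)).prod hgc.isCompact
      |>.exists_bound_of_continuousOn
        (hρtcont.mono (fun p hp => ⟨hsub _ hp.1, mem_univ _⟩))
    refine (hasDerivAt_integral_of_dominated_loc_of_deriv_le (s := Icc a c)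
      (F := fun t x => ρ t x * g x) (F' := fun t x => deriv (fun s => ρ s x) t * g x)
      (bound := fun x => C * |g x|) (Icc_mem_nhds hat htc) ?_ ?_ ?_ ?_ ?_ ?_).2
    · filter_upwards [Icc_mem_nhds hat htc] with s hs
      exact ((hρc s (hIoo (hsub s hs))).mul hg).aestronglyMeasurable
    · exact ((hρc t (hIoo ht)).mul hg).integrable_of_hasCompactSupport hgc.mul_left
    · have : ContinuousOn (fun x : Fin d → ℝ => deriv (fun s => ρ s x) t) univ :=
        hρtcont.comp (f := fun x : Fin d → ℝ => (t, x)) (by fun_prop)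
          (fun x _ => ⟨ht, mem_univ _⟩)
      exact ((continuousOn_univ.1 this).mul hg).aestronglyMeasurable
    · refine Filter.Eventually.of_forall fun x s hs => ?_
      rw [norm_mul, Real.norm_eq_abs (g x)]
      by_cases hx : x ∈ tsupport g
      · exact mul_le_mul_of_nonneg_right (hC (s, x) ⟨hs, hx⟩) (abs_nonneg _)
      · simp [image_eq_zero_of_notMem_tsupport hx]
    · exact ((hg.integrable_of_hasCompactSupport hgc).abs).const_mul _
    · refine Filter.Eventually.of_forall fun x s hs => ?_
      exact ((hρt x s (hsub s hs)).hasDerivAt).mul_const _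
  -- the cutoff
  let χ : ContDiffBump (0 : Fin d → ℝ) := ⟨1, 2, by norm_num, by norm_num⟩
  have hχ : ContDiff ℝ 2 χ := χ.contDiff
  have hχ1 : ContDiff ℝ 1 χ := χ.contDiff
  have hχc : HasCompactSupport χ := χ.hasCompactSupport
  have hb1 : ∀ i, ∃ C, ∀ x, |vderiv (X i) χ x| ≤ C := fun i =>
    (vderiv_compact (X i) hχc).exists_bound_of_continuous
      (vderiv_continuous (hXsm i).continuous hχ1)
  have hb2 : ∀ i, ∃ C, ∀ x, |vderiv (X i) (vderiv (X i) χ) x| ≤ C := fun i =>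
    (vderiv_compact (X i) (vderiv_compact (X i) hχc)).exists_bound_of_continuous
      (vderiv_continuous (hXsm i).continuous (vderiv_contDiff (hXsm i) hχ))
  choose C1 hC1 using hb1
  choose C2 hC2 using hb2
  have main : ∀ t ∈ Ioc (0:ℝ) T, ∀ l : ℝ, 0 < l →
      |(∫ x, ρ t x * χ (dil w l x)) - ∫ x, ρ 0 x * χ (dil w l x)|
        ≤ (∑ i, (σ * (l * l * C2 i) + Mb * (l * C1 i))) * Mint * t := by
    intro t ht l hl
    have hg : ContDiff ℝ 2 (fun x => χ (dil w l x)) := hχ.comp (dil_contDiff w l)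
    have hgc : HasCompactSupport (fun x => χ (dil w l x)) := dil_compact w hl hχc
    have d1 : ∀ i, vderiv (X i) (fun x => χ (dil w l x))
        = fun x => l * vderiv (X i) χ (dil w l x) := by
      intro i
      simpa using vderiv_dil (hXhom i) hl (hχ1.differentiable (by norm_num)) 1
    have d2 : ∀ i, vderiv (X i) (vderiv (X i) (fun x => χ (dil w l x)))
        = fun x => (l * l) * vderiv (X i) (vderiv (X i) χ) (dil w l x) := by
      intro i
      rw [d1 i]
      exact vderiv_dil (hXhom i) hl
        ((vderiv_contDiff (hXsm i) hχ).differentiable (by norm_num)) l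
    obtain ⟨c, hc, hce⟩ := exists_hasDerivAt_eq_slope
      (fun t => ∫ x, ρ t x * χ (dil w l x))
      (fun t => ∫ x, deriv (fun s => ρ s x) t * χ (dil w l x)) ht.1
      ((hFcont _ hg.continuous hgc).mono (Icc_subset_Icc_right ht.2))
      (fun s hs => hFder _ hg.continuous hgc s ⟨hs.1, hs.2.trans_le ht.2⟩)
    have hk := key _ hg hgc (fun i => l * C1 i) (fun i => l * l * C2 i)
      (fun i x => by
        rw [d1 i, abs_mul, abs_of_pos hl]
        exact mul_le_mul_of_nonneg_left (hC1 i _) hl.le)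
      (fun i x => by
        rw [d2 i, abs_mul, abs_of_pos (mul_pos hl hl)]
        exact mul_le_mul_of_nonneg_left (hC2 i _) (mul_pos hl hl).le)
      c ⟨hc.1, hc.2.trans_le ht.2⟩
    rw [hce, sub_zero, abs_div, abs_of_pos ht.1, div_le_iff₀ ht.1] at hk
    exact hk
  have hlim : ∀ t ∈ Icc (0:ℝ) T, Filter.Tendsto (fun l => ∫ x, ρ t x * χ (dil w l x))
      (nhdsWithin 0 (Ioi 0)) (nhds (∫ x, ρ t x)) := by
    intro t ht
    refine tendsto_integral_filter_of_dominated_convergence (fun x => |ρ t x|) ?_ ?_ ?_ ?_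
    · exact Filter.Eventually.of_forall fun l => ((hρc t ht).mul
        (hχ.continuous.comp (dil_contDiff w l (n := 0)).continuous)).aestronglyMeasurable
    · refine Filter.Eventually.of_forall fun l => Filter.Eventually.of_forall fun x => ?_
      rw [Real.norm_eq_abs, abs_mul, abs_of_nonneg χ.nonneg]
      exact mul_le_of_le_one_right (abs_nonneg _) χ.le_one
    · exact (hint t ht).abs
    · refine Filter.Eventually.of_forall fun x => ?_
      have hcont : Continuous (fun l : ℝ => ρ t x * χ (dil w l x)) := by
        refine continuous_const.mul (hχ.continuous.comp ?_)
        unfold dil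
        fun_prop
      have h0 : dil w 0 x = 0 := by
        funext i
        simp [dil, (hw i).ne']
      have h1 : χ (0 : Fin d → ℝ) = 1 := χ.one_of_mem_closedBall (by simp [χ])
      have := (hcont.tendsto 0).mono_left (nhdsWithin_le_nhds (s := Ioi 0))
      simpa [h0, h1] using this
  intro t ht
  rcases ht.1.eq_or_lt with h | h
  · rw [← h]
  have hL := ((hlim t ht).sub (hlim 0 ⟨le_rfl, hT.le⟩)).abs
  have hR : Filter.Tendsto (fun l : ℝ => (∑ i, (σ * (l * l * C2 i) + Mb * (l * C1 i))) * Mint * t)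
      (nhdsWithin 0 (Ioi 0)) (nhds 0) := by
    have hcont : Continuous
        (fun l : ℝ => (∑ i, (σ * (l * l * C2 i) + Mb * (l * C1 i))) * Mint * t) := by fun_prop
    simpa using (hcont.tendsto 0).mono_left (nhdsWithin_le_nhds (s := Ioi 0))
  have hle := le_of_tendsto_of_tendsto hL hR (by
    filter_upwards [self_mem_nhdsWithin] with l hl
    exact main t ⟨h, ht.2⟩ l hl)
  exact sub_eq_zero.1 (abs_nonpos_iff.1 hle)
end
end
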